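/- For integers 0 ≤ r ≤ m, the treewidth of the binary Reed–Muller code RM(r,m) equals its trelliswidth: κ(r,m) = τ(r,m) = Σ_{j=0}^{r} C(m−2j−1, r−j) if m ≥ 2r+1, and κ(r,m) = τ(r,m) = 1 + Σ_{j=0}^{m−r−1} C(m−2j−1, r−j) if m < 2r+1. -/

import Mathlib

open Module

/-- The submodule of vectors supported on `J` (i.e. zero outside `J`). -/
def supportedOn (F : Type) [Field F] {n : ℕ} (J : Set (Fin n)) : Submodule F (Fin n → F) :=
  Submodule.pi Jᶜ fun _ => ⊥

/-- Dimension of the shortening `C_J` of the code `C` to the coordinates in `J`. -/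
noncomputable def shortDim {F : Type} [Field F] {n : ℕ}
    (C : Submodule F (Fin n → F)) (J : Set (Fin n)) : ℕ :=
  finrank F ↥(C ⊓ supportedOn F J)

/-- Trelliswidth: the least branch complexity of any trellis realization of `C`,
minimized over all orderings (bijections from positions to coordinates) of `C`. -/
noncomputable def trellisWidth {F : Type} [Field F] {n : ℕ}
    (C : Submodule F (Fin n → F)) : ℕ :=
  sInf {t : ℕ | ∃ π : Equiv.Perm (Fin n),
    t = Finset.univ.sup fun i : Fin n =>
      finrank F ↥C - shortDim C (⇑π '' {j | j < i}) - shortDim C (⇑π '' {j | i < j})}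

/-- Degree of a vertex (the number of its neighbours). -/
noncomputable def deg {V : Type} (T : SimpleGraph V) (v : V) : ℕ :=
  (T.neighborSet v).ncard

/-- The set of leaves (degree-1 vertices) of a graph. -/
def leaves {V : Type} (T : SimpleGraph V) : Set V :=
  {v | deg T v = 1}

/-- A cubic tree: every node is a leaf (degree 1) or internal of degree 3. -/
def IsCubic {V : Type} (T : SimpleGraph V) : Prop :=
  ∀ v, deg T v = 1 ∨ deg T v = 3

/-- `compAway T v u` : the vertex set of the component of `T` minus the edge `{v,u}`
containing `u` (hence not containing `v`); this is `T_{e,v}` for `e = {u,v}`. -/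
def compAway {V : Type} (T : SimpleGraph V) (v u : V) : Set V :=
  {w | (T.deleteEdges {s(v, u)}).Reachable u w}

/-- `nAway T v u` : the number of leaves of `T` lying in the component of `T - {v,u}`
not containing `v`; this is `n_{e,v}` for `e = {u,v}`. -/
noncomputable def nAway {V : Type} (T : SimpleGraph V) (v u : V) : ℕ :=
  (compAway T v u ∩ leaves T).ncard

/-- Neighbours of a vertex, as a `Finset`. -/
noncomputable def nbrFinset {V : Type} [Fintype V] (T : SimpleGraph V) (v : V) : Finset V :=
  (T.neighborSet v).toFinite.toFinset

/-- `κ_v`: local constraint-code dimension at node `v` of the minimal realization of `C`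
on the tree decomposition `(T, ω)`. -/
noncomputable def kappaNode {F : Type} [Field F] {n : ℕ} (C : Submodule F (Fin n → F))
    {V : Type} [Fintype V] (T : SimpleGraph V) (ω : Fin n → V) (v : V) : ℕ :=
  finrank F ↥C - ∑ u ∈ nbrFinset T v, shortDim C (ω ⁻¹' compAway T v u)

/-- Constraint complexity `κ(C; T, ω)` of the minimal realization of `C` on `(T, ω)`. -/
noncomputable def constraintComplexity {F : Type} [Field F] {n : ℕ}
    (C : Submodule F (Fin n → F)) {V : Type} [Fintype V]
    (T : SimpleGraph V) (ω : Fin n → V) : ℕ :=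
  Finset.univ.sup (kappaNode C T ω)

/-- Treewidth of a code: the least constraint complexity of any of its tree
decompositions `(T, ω)` with `T` a finite tree. -/
noncomputable def treeWidth {F : Type} [Field F] {n : ℕ}
    (C : Submodule F (Fin n → F)) : ℕ :=
  sInf {t : ℕ | ∃ (N : ℕ) (T : SimpleGraph (Fin N)) (ω : Fin n → Fin N),
    T.IsTree ∧ t = constraintComplexity C T ω}

/-- The binary Reed–Muller code `RM(r,m)`: the evaluation vectors, at the points of
`{0,1}^m` listed in the standard bit order, of the `m`-variable polynomials over `F₂`
of total degree at most `r`. -/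
def RMcode (r m : ℕ) : Submodule (ZMod 2) (Fin (2 ^ m) → ZMod 2) :=
  Submodule.span (ZMod 2)
    {w | ∃ f : MvPolynomial (Fin m) (ZMod 2), f.totalDegree ≤ r ∧
      w = fun i => MvPolynomial.eval (fun j : Fin m => if Nat.testBit i.val j.val then 1 else 0) f}

/-- The claimed value `τ(r,m)` of the trelliswidth of `RM(r,m)`. -/
def tauRM (r m : ℕ) : ℕ :=
  if 2 * r + 1 ≤ m then ∑ j ∈ Finset.range (r + 1), Nat.choose (m - (2 * j + 1)) (r - j)
  else 1 + ∑ j ∈ Finset.range (m - r), Nat.choose (m - (2 * j + 1)) (r - j)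

/-! ### Binary weights and the counting function -/

/-- Binary weight (number of ones). -/
def bwt (n : ℕ) : ℕ := (Nat.digits 2 n).sum

theorem bwt_zero : bwt 0 = 0 := by simp [bwt]

theorem bwt_even (n : ℕ) : bwt (2 * n) = bwt n := by
  rcases Nat.eq_zero_or_pos n with rfl | h
  · simp
  · unfold bwt
    rw [Nat.digits_def' (by norm_num) (by omega)]
    simp

theorem bwt_odd (n : ℕ) : bwt (2 * n + 1) = bwt n + 1 := by
  unfold bwt
  rw [Nat.digits_def' (by norm_num) (by omega)]
  have h1 : (2 * n + 1) % 2 = 1 := by omega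
  have h2 : (2 * n + 1) / 2 = n := by omega
  rw [h1, h2, List.sum_cons, add_comm]

theorem bwt_succ_le (n : ℕ) : bwt (n + 1) ≤ bwt n + 1 := by
  induction n using Nat.strong_induction_on with
  | _ n ih =>
    rcases Nat.even_or_odd' n with ⟨k, rfl | rfl⟩
    · rw [bwt_odd, bwt_even]
    · have h : 2 * k + 1 + 1 = 2 * (k + 1) := by ring
      rw [h, bwt_odd, bwt_even]
      have := ih k (by omega)
      omega

theorem bwt_compl (m : ℕ) : ∀ a b : ℕ, a + b + 1 = 2 ^ m → bwt a + bwt b = m := by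
  induction m with
  | zero =>
    intro a b h
    have ha : a = 0 := by simp at h; omega
    have hb : b = 0 := by simp at h; omega
    subst ha; subst hb; simp [bwt_zero]
  | succ m ih =>
    intro a b h
    rw [pow_succ] at h
    rcases Nat.even_or_odd' a with ⟨a', rfl | rfl⟩ <;>
      rcases Nat.even_or_odd' b with ⟨b', rfl | rfl⟩
    · omega
    · rw [bwt_odd, bwt_even]; have := ih a' b' (by omega); omega
    · rw [bwt_odd, bwt_even]; have := ih a' b' (by omega); omega
    · omega

theorem bwt_third (m : ℕ) : (∀ x, 3 * x + 1 = 2 ^ m → 2 * bwt x = m) ∧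
    (∀ x, 3 * x + 2 = 2 ^ m → 2 * bwt x + 1 = m) := by
  induction m with
  | zero =>
    constructor
    · intro x hx
      have : x = 0 := by simp at hx; omega
      subst this; simp [bwt_zero]
    · intro x hx
      simp at hx
  | succ m ih =>
    constructor
    · intro x hx
      rw [pow_succ] at hx
      obtain ⟨y, rfl⟩ : ∃ y, x = 2 * y + 1 := ⟨x / 2, by omega⟩
      have := ih.2 y (by omega)
      rw [bwt_odd]; omega
    · intro x hx
      rw [pow_succ] at hx
      obtain ⟨y, rfl⟩ : ∃ y, x = 2 * y := ⟨x / 2, by omega⟩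
      have := ih.1 y (by omega)
      rw [bwt_even]; omega

/-- `UU d s` : number of `j < s` of binary weight at least `d`. -/
def UU (d : ℕ) : ℕ → ℕ
  | 0 => 0
  | s + 1 => UU d s + if d ≤ bwt s then 1 else 0

theorem UU_zero (d : ℕ) : UU d 0 = 0 := rfl

theorem UU_succ (d s : ℕ) : UU d (s + 1) = UU d s + if d ≤ bwt s then 1 else 0 := rfl

theorem UU_even (d s : ℕ) : UU d (2 * s) = UU d s + UU (d - 1) s := by
  induction s with
  | zero => rfl
  | succ s ih =>
    have h : 2 * (s + 1) = 2 * s + 1 + 1 := by ring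
    rw [h, UU_succ, UU_succ, UU_succ, UU_succ, ih, bwt_even, bwt_odd]
    have : (d ≤ bwt s + 1) = (d - 1 ≤ bwt s) := by
      apply propext; omega
    simp only [this]
    omega

theorem UU_odd (d s : ℕ) : UU d (2 * s + 1) = UU d (s + 1) + UU (d - 1) s := by
  rw [UU_succ, UU_even, UU_succ, bwt_even]; omega

theorem UU_d_zero (s : ℕ) : UU 0 s = s := by
  induction s with
  | zero => rfl
  | succ s ih => rw [UU_succ, ih]; simp

theorem UU_mono (d : ℕ) {a b : ℕ} (h : a ≤ b) : UU d a ≤ UU d b := by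
  induction h with
  | refl => exact le_rfl
  | step h ih => rw [UU_succ]; omega

theorem UU_anti (d s : ℕ) : UU d s ≤ UU (d - 1) s := by
  induction s with
  | zero => exact le_rfl
  | succ s ih =>
    rw [UU_succ, UU_succ]
    split_ifs <;> omega

theorem UU_one (d : ℕ) (hd : 1 ≤ d) : UU d 1 = 0 := by
  rw [UU_succ, UU_zero, bwt_zero, if_neg (by omega)]

/-- `bwt j ≥ 1` iff `j ≥ 1`. -/
theorem bwt_pos (j : ℕ) (h : 1 ≤ j) : 1 ≤ bwt j := by
  induction j using Nat.strong_induction_on with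
  | _ n ih =>
    rcases Nat.even_or_odd' n with ⟨k, rfl | rfl⟩
    · rw [bwt_even]; exact ih k (by omega) (by omega)
    · rw [bwt_odd]; omega

theorem UU_d_one (s : ℕ) : UU 1 s = s - 1 := by
  induction s with
  | zero => rfl
  | succ s ih =>
    rw [UU_succ, ih]
    rcases Nat.eq_zero_or_pos s with rfl | h
    · simp [bwt_zero]
    · rw [if_pos (bwt_pos s h)]; omega

theorem UU_big (m : ℕ) : UU (m + 1) (2 ^ m) = 0 := by
  induction m with
  | zero => simpa using UU_one 1 le_rfl
  | succ m ih =>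
    rw [pow_succ, mul_comm, UU_even, Nat.add_sub_cancel, ih]
    have := UU_anti (m + 1 + 1) (2 ^ m)
    rw [Nat.add_sub_cancel, ih] at this
    omega

theorem UU_top (m : ℕ) : UU m (2 ^ m) = 1 := by
  induction m with
  | zero => simpa using UU_d_zero 1
  | succ m ih =>
    rw [pow_succ, mul_comm, UU_even, Nat.add_sub_cancel, ih, UU_big]

theorem UU_top_lt (m s : ℕ) (h : s < 2 ^ m) : UU m s = 0 := by
  have key : UU m (2 ^ m - 1) = 0 := by
    induction m generalizing s with
    | zero => rfl
    | succ m ih =>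
      have hp : 0 < 2 ^ m := by positivity
      have h1 : 2 ^ (m + 1) - 1 = 2 * (2 ^ m - 1) + 1 := by rw [pow_succ]; omega
      have h2 : 2 ^ m - 1 + 1 = 2 ^ m := by omega
      rw [h1, UU_odd, h2, UU_big, Nat.add_sub_cancel, ih 0 hp]
  have := UU_mono m (show s ≤ 2 ^ m - 1 by omega)
  omega

/-- Key superadditivity estimate. -/
theorem UU_shift : ∀ (n d a b : ℕ), a + b ≤ n → b ≤ a → UU d a + UU (d - 1) b ≤ UU d (a + b) := by
  intro n
  induction n with
  | zero =>
    intro d a b h1 h2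
    have ha : a = 0 := by omega
    have hb : b = 0 := by omega
    subst ha; subst hb; simp [UU_zero]
  | succ n ih =>
    intro d a b h1 h2
    rcases Nat.eq_zero_or_pos b with rfl | hb
    · simp [UU_zero]
    rcases Nat.even_or_odd' a with ⟨x, rfl | rfl⟩ <;>
      rcases Nat.even_or_odd' b with ⟨y, rfl | rfl⟩
    · have e : 2 * x + 2 * y = 2 * (x + y) := by ring
      rw [e, UU_even, UU_even, UU_even]
      have i1 := ih d x y (by omega) (by omega)
      have i2 := ih (d - 1) x y (by omega) (by omega)
      omega
    · have e : 2 * x + (2 * y + 1) = 2 * (x + y) + 1 := by ring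
      rw [e, UU_even, UU_odd, UU_odd]
      have i1 := ih d x (y + 1) (by omega) (by omega)
      have i2 := ih (d - 1) x y (by omega) (by omega)
      rw [← add_assoc] at i1
      omega
    · have e : 2 * x + 1 + 2 * y = 2 * (x + y) + 1 := by ring
      rw [e, UU_even, UU_odd, UU_odd]
      have i1 := ih d (x + 1) y (by omega) (by omega)
      have i2 := ih (d - 1) x y (by omega) (by omega)
      rw [show x + 1 + y = x + y + 1 by ring] at i1
      omega
    · have e : 2 * x + 1 + (2 * y + 1) = 2 * (x + y + 1) := by ring
      rw [e, UU_even, UU_odd, UU_odd]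
      have i1 := ih d (x + 1) y (by omega) (by omega)
      rw [show x + 1 + y = x + y + 1 by ring] at i1
      rcases Nat.lt_or_ge y x with hyx | hyx
      · have i2 := ih (d - 1) x (y + 1) (by omega) (by omega)
        rw [← add_assoc] at i2
        have s1 := UU_succ (d - 1) y
        have s2 := UU_succ (d - 1 - 1) y
        split_ifs at s1 s2 <;> omega
      · have hxy : x = y := by omega
        subst hxy
        have i2 := ih (d - 1) (x + 1) x (by omega) (by omega)
        rw [show x + 1 + x = x + x + 1 by ring] at i2
        omega

theorem UU_add (d a b : ℕ) : UU d a + UU d b ≤ UU d (a + b) := by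
  rcases le_total b a with h | h
  · have := UU_shift _ d a b le_rfl h
    have := UU_anti d b
    omega
  · have := UU_shift _ d b a le_rfl h
    have := UU_anti d a
    rw [add_comm b a] at *
    omega

theorem UU_sum {ι : Type*} (d : ℕ) (s : Finset ι) (f : ι → ℕ) :
    ∑ i ∈ s, UU d (f i) ≤ UU d (∑ i ∈ s, f i) := by
  classical
  induction s using Finset.induction_on with
  | empty => simp [UU_zero]
  | insert a s ha ih =>
    rw [Finset.sum_insert ha, Finset.sum_insert ha]
    have := UU_add d (f a) (∑ i ∈ s, f i)
    omega

/-! ### The value `tauRM` -/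

theorem tau_r_zero (m : ℕ) : tauRM 0 m = 1 := by
  unfold tauRM
  split_ifs with h
  · simp
  · have : m = 0 := by omega
    subst this; simp

theorem tau_diag (m : ℕ) : tauRM m m = 1 := by
  unfold tauRM
  split_ifs with h
  · have : m = 0 := by omega
    subst this; simp
  · simp

theorem tau_diag' (r : ℕ) (hr : 1 ≤ r) : tauRM r (r + 1) = 2 := by
  unfold tauRM
  rw [if_neg (by omega)]
  simp

theorem choose_pascal (m r j : ℕ) (h1 : 2 * j + 1 ≤ m) (h2 : j ≤ r) :
    Nat.choose (m + 1 - (2 * j + 1)) (r + 1 - j) =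
      Nat.choose (m - (2 * j + 1)) (r + 1 - j) + Nat.choose (m - (2 * j + 1)) (r - j) := by
  rw [show m + 1 - (2 * j + 1) = (m - (2 * j + 1)) + 1 by omega,
    show r + 1 - j = (r - j) + 1 by omega, Nat.choose_succ_succ, add_comm]

theorem tau_pascal (r d : ℕ) :
    tauRM (r + 1) (r + 1 + d + 1) + (if d + 1 < r + 1 then 1 else 0) =
      tauRM (r + 1) (r + 1 + d) + tauRM r (r + 1 + d) := by
  unfold tauRM
  rcases lt_trichotomy d r with h | h | h
  · -- d < r
    rw [if_neg (by omega), if_pos (by omega), if_neg (by omega), if_neg (by omega),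
      show r + 1 + d + 1 - (r + 1) = d + 1 by omega, show r + 1 + d - (r + 1) = d by omega,
      show r + 1 + d - r = d + 1 by omega]
    have e : ∑ j ∈ Finset.range (d + 1), (r + 1 + d - (2 * j + 1)).choose (r + 1 - j) =
        ∑ j ∈ Finset.range d, (r + 1 + d - (2 * j + 1)).choose (r + 1 - j) := by
      rw [Finset.sum_range_succ, Nat.choose_eq_zero_of_lt (by omega), add_zero]
    have e2 : ∑ j ∈ Finset.range (d + 1), (r + 1 + d + 1 - (2 * j + 1)).choose (r + 1 - j) =
        ∑ j ∈ Finset.range (d + 1), (r + 1 + d - (2 * j + 1)).choose (r + 1 - j) +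
        ∑ j ∈ Finset.range (d + 1), (r + 1 + d - (2 * j + 1)).choose (r - j) := by
      rw [← Finset.sum_add_distrib]
      refine Finset.sum_congr rfl fun j hj => ?_
      rw [Finset.mem_range] at hj
      exact choose_pascal _ _ _ (by omega) (by omega)
    omega
  · -- d = r
    subst h
    rw [if_neg (by omega), if_neg (by omega), if_neg (by omega), if_pos (by omega),
      show d + 1 + d + 1 - (d + 1) = d + 1 by omega, show d + 1 + d - (d + 1) = d by omega]
    have e : ∑ j ∈ Finset.range (d + 1), (d + 1 + d - (2 * j + 1)).choose (d + 1 - j) =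
        ∑ j ∈ Finset.range d, (d + 1 + d - (2 * j + 1)).choose (d + 1 - j) := by
      rw [Finset.sum_range_succ, Nat.choose_eq_zero_of_lt (by omega), add_zero]
    have e2 : ∑ j ∈ Finset.range (d + 1), (d + 1 + d + 1 - (2 * j + 1)).choose (d + 1 - j) =
        ∑ j ∈ Finset.range (d + 1), (d + 1 + d - (2 * j + 1)).choose (d + 1 - j) +
        ∑ j ∈ Finset.range (d + 1), (d + 1 + d - (2 * j + 1)).choose (d - j) := by
      rw [← Finset.sum_add_distrib]
      refine Finset.sum_congr rfl fun j hj => ?_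
      rw [Finset.mem_range] at hj
      exact choose_pascal _ _ _ (by omega) (by omega)
    omega
  · -- r < d
    have e2 : ∑ j ∈ Finset.range (r + 1), (r + 1 + d + 1 - (2 * j + 1)).choose (r + 1 - j) =
        ∑ j ∈ Finset.range (r + 1), (r + 1 + d - (2 * j + 1)).choose (r + 1 - j) +
        ∑ j ∈ Finset.range (r + 1), (r + 1 + d - (2 * j + 1)).choose (r - j) := by
      rw [← Finset.sum_add_distrib]
      refine Finset.sum_congr rfl fun j hj => ?_
      rw [Finset.mem_range] at hj
      exact choose_pascal _ _ _ (by omega) (by omega)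
    rw [if_pos (by omega), if_neg (by omega), if_pos (by omega : 2 * r + 1 ≤ r + 1 + d),
      Finset.sum_range_succ, e2]
    simp only [Nat.sub_self, Nat.choose_zero_right]
    split_ifs with h3
    · rw [Finset.sum_range_succ _ (r + 1)]
      simp only [Nat.sub_self, Nat.choose_zero_right]
      omega
    · have : d = r + 1 := by omega
      subst this
      rw [show r + 1 + (r + 1) - (r + 1) = r + 1 by omega]
      omega

/-! ### Numerical lower and upper bounds -/

/-- Admissible triples. -/
def Reg (m a b c : ℕ) : Prop :=
  a + b + c = 2 ^ m ∧
    ((3 * a < 2 ^ m ∧ 3 * b < 2 ^ m ∧ 3 * c < 2 * 2 ^ m) ∨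
      (3 * a + 2 = 2 ^ m ∧ b = a + 1 ∧ c = a + 1))

theorem not_three_dvd_pow (m x : ℕ) : 3 * x ≠ 2 ^ m := by
  intro h
  have h1 : 3 ∣ 2 ^ m := ⟨x, h.symm⟩
  have := Nat.Prime.dvd_of_dvd_pow Nat.prime_three h1
  omega

/-- The lower bound for an admissible triple. -/
theorem lower (m : ℕ) : ∀ r d a b c : ℕ, r + d = m → 1 ≤ d → Reg m a b c →
    tauRM r m + UU d a + UU d b + UU d c ≤ UU d (2 ^ m) := by
  induction m with
  | zero => intro r d a b c h1 h2; omega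
  | succ m ih =>
    intro r d a b c hm hd hreg
    rcases Nat.eq_zero_or_pos r with rfl | hr
    · -- r = 0
      have hd' : d = m + 1 := by omega
      subst hd'
      have hp : 2 ≤ 2 ^ (m + 1) := by
        rw [pow_succ]; have : 0 < 2 ^ m := by positivity
        omega
      obtain ⟨hs, h | h⟩ := hreg
      · rw [tau_r_zero, UU_top, UU_top_lt _ a (by omega), UU_top_lt _ b (by omega),
          UU_top_lt _ c (by omega)]
      · rw [tau_r_zero, UU_top, UU_top_lt _ a (by omega), UU_top_lt _ b (by omega),
          UU_top_lt _ c (by omega)]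
    rcases Nat.lt_or_ge d 2 with hd2 | hd2
    · -- d = 1
      have hd' : d = 1 := by omega
      subst hd'
      have hr' : r = m := by omega
      subst hr'
      have hp : 4 ≤ 2 ^ (r + 1) := by
        calc 4 = 2 ^ 2 := by norm_num
          _ ≤ 2 ^ (r + 1) := Nat.pow_le_pow_right (by norm_num) (by omega)
      rw [tau_diag' r hr]
      simp only [UU_d_one]
      obtain ⟨hs, h | h⟩ := hreg <;> omega
    -- main step
    obtain ⟨R, rfl⟩ : ∃ R, r = R + 1 := ⟨r - 1, by omega⟩
    obtain ⟨D, rfl⟩ : ∃ D, d = D + 1 := ⟨d - 1, by omega⟩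
    have hmm : m = R + 1 + D := by omega
    have hpas := tau_pascal R D
    rw [← hmm] at hpas
    have hp : 4 ≤ 2 ^ m := by
      calc 4 = 2 ^ 2 := by norm_num
        _ ≤ 2 ^ m := Nat.pow_le_pow_right (by norm_num) (by omega)
    -- combination of both levels
    have I1 : ∀ x y z, Reg m x y z →
        tauRM R m + UU (D + 1) x + UU (D + 1) y + UU (D + 1) z ≤ UU (D + 1) (2 ^ m) :=
      fun x y z h => ih R (D + 1) x y z (by omega) (by omega) h
    have I2 : ∀ x y z, Reg m x y z →
        tauRM (R + 1) m + UU D x + UU D y + UU D z ≤ UU D (2 ^ m) :=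
      fun x y z h => ih (R + 1) D x y z (by omega) (by omega) h
    have htop : UU (D + 1) (2 ^ (m + 1)) = UU (D + 1) (2 ^ m) + UU D (2 ^ m) := by
      rw [pow_succ, mul_comm, UU_even, Nat.add_sub_cancel]
    rw [htop]
    have ev : ∀ x, UU (D + 1) (2 * x) = UU (D + 1) x + UU D x := fun x => by
      rw [UU_even, Nat.add_sub_cancel]
    have od : ∀ x, UU (D + 1) (2 * x + 1) = UU (D + 1) (x + 1) + UU D x := fun x => by
      rw [UU_odd, Nat.add_sub_cancel]
    have s1 := UU_succ (D + 1)
    have s0 := UU_succ D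
    have not3 := not_three_dvd_pow m
    have not3' := not_three_dvd_pow (m + 1)
    have t1 := (bwt_third m).1
    have t2 := (bwt_third m).2
    have t1' := (bwt_third (m + 1)).1
    have t2' := (bwt_third (m + 1)).2
    obtain ⟨hs, hreg⟩ := hreg
    have hpow : 2 ^ (m + 1) = 2 * 2 ^ m := by rw [pow_succ, mul_comm]
    rw [hpow] at hs hreg t1' t2' not3'
    rcases hreg with ⟨ha, hb, hc⟩ | ⟨ha, hb, hc⟩
    · rcases Nat.even_or_odd' a with ⟨x, rfl | rfl⟩ <;>
        rcases Nat.even_or_odd' b with ⟨y, rfl | rfl⟩ <;>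
          rcases Nat.even_or_odd' c with ⟨z, rfl | rfl⟩
      · -- all even
        have hR : Reg m x y z := ⟨by omega, Or.inl ⟨by omega, by omega, by omega⟩⟩
        have i1 := I1 _ _ _ hR
        have i2 := I2 _ _ _ hR
        rw [ev, ev, ev]
        split_ifs at hpas <;> omega
      · omega
      · omega
      · -- b, c odd
        rw [ev, od, od]
        by_cases hbb : 3 * (y + 1) < 2 ^ m
        · by_cases hcc : 3 * (z + 1) < 2 * 2 ^ m
          · have i1 := I1 x (y + 1) z ⟨by omega, Or.inl ⟨by omega, by omega, by omega⟩⟩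
            have i2 := I2 x y (z + 1) ⟨by omega, Or.inl ⟨by omega, by omega, by omega⟩⟩
            have a1 := s1 z
            have a0 := s0 z
            split_ifs at hpas a1 a0 <;> omega
          · have hR : Reg m x (y + 1) z := ⟨by omega, Or.inl ⟨by omega, by omega, by omega⟩⟩
            have i1 := I1 _ _ _ hR
            have i2 := I2 _ _ _ hR
            have a1 := s1 z
            have a0 := s0 y
            have := t2' z (by have := not3' (z + 1); omega)
            split_ifs at hpas a1 a0 <;> omega
        · have hyy : 3 * y + 2 = 2 ^ m := by have := not3 (y + 1); omega
          have hR : Reg m x y (z + 1) := ⟨by omega, Or.inl ⟨by omega, by omega, by omega⟩⟩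
          have i1 := I1 _ _ _ hR
          have i2 := I2 _ _ _ hR
          have a1 := s1 y
          have a0 := s0 z
          have := t2 y (by omega)
          split_ifs at hpas a1 a0 <;> omega
      · omega
      · -- a, c odd
        rw [ev, od, od]
        by_cases hbb : 3 * (x + 1) < 2 ^ m
        · by_cases hcc : 3 * (z + 1) < 2 * 2 ^ m
          · have i1 := I1 (x + 1) y z ⟨by omega, Or.inl ⟨by omega, by omega, by omega⟩⟩
            have i2 := I2 x y (z + 1) ⟨by omega, Or.inl ⟨by omega, by omega, by omega⟩⟩
            have a1 := s1 z
            have a0 := s0 z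
            split_ifs at hpas a1 a0 <;> omega
          · have hR : Reg m (x + 1) y z := ⟨by omega, Or.inl ⟨by omega, by omega, by omega⟩⟩
            have i1 := I1 _ _ _ hR
            have i2 := I2 _ _ _ hR
            have a1 := s1 z
            have a0 := s0 x
            have := t2' z (by have := not3' (z + 1); omega)
            split_ifs at hpas a1 a0 <;> omega
        · have hyy : 3 * x + 2 = 2 ^ m := by have := not3 (x + 1); omega
          have hR : Reg m x y (z + 1) := ⟨by omega, Or.inl ⟨by omega, by omega, by omega⟩⟩
          have i1 := I1 _ _ _ hR
          have i2 := I2 _ _ _ hR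
          have a1 := s1 x
          have a0 := s0 z
          have := t2 x (by omega)
          split_ifs at hpas a1 a0 <;> omega
      · -- a, b odd
        rw [ev, od, od]
        by_cases haa : 3 * (x + 1) < 2 ^ m
        · by_cases hbb : 3 * (y + 1) < 2 ^ m
          · have i1 := I1 (x + 1) y z ⟨by omega, Or.inl ⟨by omega, by omega, by omega⟩⟩
            have i2 := I2 x (y + 1) z ⟨by omega, Or.inl ⟨by omega, by omega, by omega⟩⟩
            have a1 := s1 y
            have a0 := s0 y
            split_ifs at hpas a1 a0 <;> omega
          · have hyy : 3 * y + 2 = 2 ^ m := by have := not3 (y + 1); omega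
            have hR : Reg m (x + 1) y z := ⟨by omega, Or.inl ⟨by omega, by omega, by omega⟩⟩
            have i1 := I1 _ _ _ hR
            have i2 := I2 _ _ _ hR
            have a1 := s1 y
            have a0 := s0 x
            have := t2 y (by omega)
            split_ifs at hpas a1 a0 <;> omega
        · have hxx : 3 * x + 2 = 2 ^ m := by have := not3 (x + 1); omega
          by_cases hbb : 3 * (y + 1) < 2 ^ m
          · have hR : Reg m x (y + 1) z := ⟨by omega, Or.inl ⟨by omega, by omega, by omega⟩⟩
            have i1 := I1 _ _ _ hR
            have i2 := I2 _ _ _ hR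
            have a1 := s1 x
            have a0 := s0 y
            have := t2 x (by omega)
            split_ifs at hpas a1 a0 <;> omega
          · have hyy : 3 * y + 2 = 2 ^ m := by have := not3 (y + 1); omega
            have hxy : x = y := by omega
            subst hxy
            have hR : Reg m x (x + 1) z := ⟨by omega, Or.inr ⟨by omega, by omega, by omega⟩⟩
            have i1 := I1 _ _ _ hR
            have i2 := I2 _ _ _ hR
            have a1 := s1 x
            have a0 := s0 x
            split_ifs at hpas a1 a0 <;> omega
      · omega
    · -- exceptional triple
      obtain ⟨x, rfl⟩ : ∃ x, a = 2 * x := ⟨a / 2, by omega⟩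
      subst hb
      subst hc
      rw [ev, od]
      have hR : Reg m x x (x + 1) := ⟨by omega, Or.inl ⟨by omega, by omega, by omega⟩⟩
      have i1 := I1 _ _ _ hR
      have i2 := I2 _ _ _ hR
      have a1 := s1 x
      have a0 := s0 x
      split_ifs at hpas a1 a0 <;> omega

theorem upper (m : ℕ) : ∀ r d a b : ℕ, r + d = m → a + b + 1 = 2 ^ m →
    UU d (2 ^ m) ≤ tauRM r m + UU d a + UU d b := by
  induction m with
  | zero =>
    intro r d a b h1 h2
    have : r = 0 := by omega
    subst this
    have : d = 0 := by omega
    subst this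
    rw [tau_r_zero, UU_top]; omega
  | succ m ih =>
    intro r d a b hm hs
    rcases Nat.eq_zero_or_pos r with rfl | hr
    · have : d = m + 1 := by omega
      subst this
      rw [tau_r_zero, UU_top]; omega
    rcases Nat.eq_zero_or_pos d with rfl | hd
    · have : r = m + 1 := by omega
      subst this
      rw [tau_diag, UU_d_zero, UU_d_zero, UU_d_zero]; omega
    obtain ⟨R, rfl⟩ : ∃ R, r = R + 1 := ⟨r - 1, by omega⟩
    obtain ⟨D, rfl⟩ : ∃ D, d = D + 1 := ⟨d - 1, by omega⟩
    have hmm : m = R + 1 + D := by omega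
    have hpas := tau_pascal R D
    rw [← hmm] at hpas
    have htop : UU (D + 1) (2 ^ (m + 1)) = UU (D + 1) (2 ^ m) + UU D (2 ^ m) := by
      rw [pow_succ, mul_comm, UU_even, Nat.add_sub_cancel]
    rw [htop]
    have hpow : 2 ^ (m + 1) = 2 * 2 ^ m := by rw [pow_succ, mul_comm]
    rw [hpow] at hs
    have ev : ∀ x, UU (D + 1) (2 * x) = UU (D + 1) x + UU D x := fun x => by
      rw [UU_even, Nat.add_sub_cancel]
    have od : ∀ x, UU (D + 1) (2 * x + 1) = UU (D + 1) (x + 1) + UU D x := fun x => by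
      rw [UU_odd, Nat.add_sub_cancel]
    -- the favourable case
    have fav : ∀ x y, x + y + 1 = 2 ^ m → (D + 1 < R + 1 → D + 1 ≤ bwt y) →
        UU (D + 1) (2 ^ m) + UU D (2 ^ m) ≤
          tauRM (R + 1) (m + 1) + UU (D + 1) (2 * x) + UU (D + 1) (2 * y + 1) := by
      intro x y hxy hw
      rw [ev, od]
      have i1 := ih R (D + 1) x y (by omega) hxy
      have i2 := ih (R + 1) D x y (by omega) hxy
      have a1 := UU_succ (D + 1) y
      split_ifs at hpas a1 <;> omega
    have main : ∀ x y, x + y + 1 = 2 ^ m →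
        UU (D + 1) (2 ^ m) + UU D (2 ^ m) ≤
          tauRM (R + 1) (m + 1) + UU (D + 1) (2 * x) + UU (D + 1) (2 * y + 1) := by
      intro x y hxy
      by_cases hw : D + 1 < R + 1 → D + 1 ≤ bwt y
      · exact fav x y hxy hw
      · push Not at hw
        obtain ⟨h1, h2⟩ := hw
        have hc := bwt_compl m x y hxy
        have hx : x ≠ 0 := by
          rintro rfl
          rw [bwt_zero] at hc
          omega
        obtain ⟨w, rfl⟩ : ∃ w, x = w + 1 := ⟨x - 1, by omega⟩
        have hw := bwt_succ_le w
        have f := fav (y + 1) w (by omega) (by omega)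
        have e1 : 2 * (w + 1) = 2 * w + 1 + 1 := by ring
        have e2 : 2 * (y + 1) = 2 * y + 1 + 1 := by ring
        rw [e2, UU_succ] at f
        rw [e1, UU_succ, bwt_odd, if_pos (by omega)]
        split_ifs at f <;> omega
    rcases Nat.even_or_odd' a with ⟨x, rfl | rfl⟩ <;>
      rcases Nat.even_or_odd' b with ⟨y, rfl | rfl⟩
    · omega
    · exact main x y (by omega)
    · have := main y x (by omega)
      omega
    · omega

theorem lower_two (r d m I : ℕ) (hm : r + d = m) (hd : 1 ≤ d) (hI : I = 2 ^ m / 3) :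
    tauRM r m + UU d I + UU d (2 ^ m - 1 - I) ≤ UU d (2 ^ m) := by
  rcases Nat.lt_or_ge m 2 with h | h
  · have h1 : m = 1 := by omega
    subst h1
    have : r = 0 := by omega
    subst this
    have : d = 1 := by omega
    subst this
    rw [tau_r_zero, UU_top, UU_top_lt _ I (by subst hI; norm_num),
      UU_top_lt _ _ (by omega)]
  · have hp : 4 ≤ 2 ^ m := by
      calc 4 = 2 ^ 2 := by norm_num
        _ ≤ 2 ^ m := Nat.pow_le_pow_right (by norm_num) (by omega)
    have h3 := not_three_dvd_pow m I
    have := lower m r d I 1 (2 ^ m - 1 - I) hm hd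
      ⟨by omega, Or.inl ⟨by omega, by omega, by omega⟩⟩
    rw [UU_one d hd] at this
    omega

/-- Lower bound for many small parts and one big part. -/
theorem lower_parts {ι : Type*} (s : Finset ι) (f : ι → ℕ) (h r d m I : ℕ) (hm : r + d = m)
    (hd : 1 ≤ d) (hI : I = 2 ^ m / 3) (hf : ∀ i ∈ s, f i ≤ I) (hh : h ≤ 2 ^ m - 1 - I)
    (hsum : ∑ i ∈ s, f i + h ≤ 2 ^ m) :
    tauRM r m + ∑ i ∈ s, UU d (f i) + UU d h ≤ UU d (2 ^ m) := by
  classical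
  by_cases hsm : ∑ i ∈ s, f i ≤ I
  · have h1 := lower_two r d m I hm hd hI
    have h2 := UU_sum d s f
    have h3 := UU_mono d hsm
    have h4 := UU_mono d hh
    omega
  · -- choose a maximal subset with sum at most `I`
    obtain ⟨A, hA, hmax⟩ := Finset.exists_max_image
      (s.powerset.filter fun A => ∑ i ∈ A, f i ≤ I) Finset.card
      ⟨∅, by simp⟩
    simp only [Finset.mem_filter, Finset.mem_powerset] at hA hmax
    obtain ⟨hAs, hAI⟩ := hA
    obtain ⟨w, hws, hwA⟩ : ∃ w ∈ s, w ∉ A := by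
      by_contra hcon
      push Not at hcon
      have : s = A := Finset.Subset.antisymm hcon hAs
      rw [this] at hsm
      exact hsm hAI
    have hbig : I + 1 ≤ f w + ∑ i ∈ A, f i := by
      by_contra hcon
      have := hmax (insert w A) ⟨Finset.insert_subset hws hAs, by
        rw [Finset.sum_insert hwA]; omega⟩
      rw [Finset.card_insert_of_notMem hwA] at this
      omega
    have hsub : insert w A ⊆ s := Finset.insert_subset hws hAs
    have e1 := Finset.sum_sdiff (f := f) hsub
    have e2 := Finset.sum_sdiff (f := fun i => UU d (f i)) hsub
    rw [Finset.sum_insert hwA] at e1 e2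
    have u1 := UU_sum d (s \ insert w A) f
    have u2 := UU_sum d A f
    have u3 := UU_add d (∑ i ∈ s \ insert w A, f i) h
    have fw := hf w hws
    set p := ∑ i ∈ A, f i
    set q := ∑ i ∈ s \ insert w A, f i
    have u4 := UU_mono d (show q + h ≤ 2 ^ m - p - f w by omega)
    have h3 := not_three_dvd_pow m I
    have := lower m r d p (f w) (2 ^ m - p - f w) hm hd
      ⟨by omega, Or.inl ⟨by omega, by omega, by omega⟩⟩
    omega

/-! ### Trees -/

section Trees

variable {V : Type} {T : SimpleGraph V}

theorem bridge_aux (hT : T.IsAcyclic) {u v : V} (h : T.Adj u v) :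
    ¬ (T.deleteEdges {s(u, v)}).Reachable u v := by
  have := SimpleGraph.isAcyclic_iff_forall_adj_isBridge.1 hT h
  rw [SimpleGraph.isBridge_iff] at this
  simpa using this

theorem compAway_opp_disjoint (hT : T.IsAcyclic) {u v : V} (h : T.Adj u v) :
    Disjoint (compAway T u v) (compAway T v u) := by
  rw [Set.disjoint_left]
  intro x hx hy
  have hx' : (T.deleteEdges {s(u, v)}).Reachable v x := hx
  have hy' : (T.deleteEdges {s(v, u)}).Reachable u x := hy
  rw [Sym2.eq_swap] at hy'
  exact bridge_aux hT h (hy'.trans hx'.symm)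

theorem notMem_compAway (hT : T.IsAcyclic) {u v : V} (h : T.Adj u v) : u ∉ compAway T u v :=
  fun hx => bridge_aux hT h (SimpleGraph.Reachable.symm hx)

theorem compAway_sub (hT : T.IsAcyclic) {u v w : V} (_hv : T.Adj u v) (hw : T.Adj u w)
    (hne : w ≠ v) : compAway T u w ⊆ compAway T v u := by
  intro x hx
  have hx' : (T.deleteEdges {s(u, w)}).Reachable w x := hx
  have key : (T.deleteEdges {s(v, u)}).Reachable w x := by
    rw [SimpleGraph.reachable_iff_reflTransGen] at hx'
    induction hx' with
    | refl => exact SimpleGraph.Reachable.refl _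
    | tail h1 h2 ih =>
      rename_i y z
      have hy : y ∈ compAway T u w := (SimpleGraph.reachable_iff_reflTransGen _ _).2 h1
      have hz : z ∈ compAway T u w :=
        (SimpleGraph.reachable_iff_reflTransGen _ _).2 (h1.tail h2)
      have hyu : y ≠ u := fun e => notMem_compAway hT hw (e ▸ hy)
      have hzu : z ≠ u := fun e => notMem_compAway hT hw (e ▸ hz)
      refine (ih hy).trans (SimpleGraph.Adj.reachable ?_)
      rw [SimpleGraph.deleteEdges_adj] at h2 ⊢
      refine ⟨h2.1, ?_⟩
      simp only [Set.mem_singleton_iff, Sym2.eq_iff]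
      tauto
  have huw : (T.deleteEdges {s(v, u)}).Reachable u w := by
    refine SimpleGraph.Adj.reachable ?_
    rw [SimpleGraph.deleteEdges_adj]
    refine ⟨hw, ?_⟩
    simp only [Set.mem_singleton_iff, Sym2.eq_iff]
    have := hw.ne
    tauto
  exact huw.trans key

theorem compAway_disjoint (hT : T.IsAcyclic) {u v w : V} (hv : T.Adj u v) (hw : T.Adj u w)
    (hne : w ≠ v) : Disjoint (compAway T u w) (compAway T u v) :=
  (compAway_opp_disjoint hT hv).symm.mono_left (compAway_sub hT hv hw hne)

theorem mem_nbrFinset [Fintype V] (u v : V) : v ∈ nbrFinset T u ↔ T.Adj u v := by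
  simp [nbrFinset]

/-- Sum of the sizes of the parts at a vertex. -/
theorem sum_parts_le [Fintype V] {n : ℕ} (hT : T.IsAcyclic) (ω : Fin n → V) (u : V) :
    ∑ w ∈ nbrFinset T u, (ω ⁻¹' compAway T u w).ncard + (ω ⁻¹' {u}).ncard ≤ n := by
  classical
  have hdis : (↑(nbrFinset T u) : Set V).PairwiseDisjoint
      fun w => (ω ⁻¹' compAway T u w).toFinset := by
    intro a ha b hb hab
    rw [Finset.mem_coe, mem_nbrFinset] at ha hb
    have := (compAway_disjoint hT hb ha hab).preimage ω
    simpa [Function.onFun, Set.disjoint_toFinset] using this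
  have h1 : ∑ w ∈ nbrFinset T u, (ω ⁻¹' compAway T u w).ncard =
      ((nbrFinset T u).biUnion fun w => (ω ⁻¹' compAway T u w).toFinset).card := by
    rw [Finset.card_biUnion hdis]
    exact Finset.sum_congr rfl fun w _ => Set.ncard_eq_toFinset_card' _
  rw [h1, Set.ncard_eq_toFinset_card', ← Finset.card_union_of_disjoint]
  · exact (Finset.card_le_univ _).trans (by simp)
  · rw [Finset.disjoint_left]
    intro x hx hx2
    rw [Finset.mem_biUnion] at hx
    obtain ⟨w, hw, hxw⟩ := hx
    rw [Set.mem_toFinset] at hxw hx2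
    rw [mem_nbrFinset] at hw
    have e : ω x = u := hx2
    have : ω x ∈ compAway T u w := hxw
    rw [e] at this
    exact notMem_compAway hT hw this

/-- A balanced vertex exists. -/
theorem exists_balanced [Fintype V] [Nonempty V] {n : ℕ} (hT : T.IsAcyclic) (ω : Fin n → V)
    (I : ℕ) :
    ∃ u : V, (∀ w ∈ nbrFinset T u, (ω ⁻¹' compAway T u w).ncard ≤ I) ∨
      (∃ v ∈ nbrFinset T u, (ω ⁻¹' compAway T u v).ncard ≤ n - 1 - I ∧
        ∀ w ∈ nbrFinset T u, w ≠ v → (ω ⁻¹' compAway T u w).ncard ≤ I) := by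
  classical
  by_cases hE : ∃ p : V × V, T.Adj p.1 p.2 ∧ I + 1 ≤ (ω ⁻¹' compAway T p.1 p.2).ncard
  · obtain ⟨p, hp, hmin⟩ := Finset.exists_min_image
      (Finset.univ.filter fun p : V × V =>
        T.Adj p.1 p.2 ∧ I + 1 ≤ (ω ⁻¹' compAway T p.1 p.2).ncard)
      (fun p => (compAway T p.1 p.2).ncard)
      (by obtain ⟨p, hp⟩ := hE; exact ⟨p, by simpa using hp⟩)
    obtain ⟨v, u⟩ := p
    simp only [Finset.mem_filter, Finset.mem_univ, true_and] at hp hmin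
    obtain ⟨hadj, hbig⟩ := hp
    refine ⟨u, Or.inr ⟨v, (mem_nbrFinset _ _).2 hadj.symm, ?_, ?_⟩⟩
    · have hd := (compAway_opp_disjoint hT hadj).preimage ω
      have h2 : (ω ⁻¹' compAway T v u ∪ ω ⁻¹' compAway T u v).ncard ≤ n := by
        have := Set.ncard_le_card (ω ⁻¹' compAway T v u ∪ ω ⁻¹' compAway T u v)
        simpa using this
      rw [Set.ncard_union_eq hd] at h2
      omega
    · intro w hw hne
      rw [mem_nbrFinset] at hw
      by_contra hcon
      have hle := hmin (u, w) ⟨hw, Nat.lt_of_not_le hcon⟩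
      have hss : compAway T u w ⊂ compAway T v u := by
        refine ⟨compAway_sub hT hadj.symm hw hne, fun hsub => ?_⟩
        exact notMem_compAway hT hw (hsub (SimpleGraph.Reachable.refl u))
      have := Set.ncard_lt_ncard hss
      simp only at hle
      omega
  · push Not at hE
    refine ⟨Classical.arbitrary V, Or.inl fun w hw => ?_⟩
    have := hE (Classical.arbitrary V, w) ((mem_nbrFinset _ _).1 hw)
    simp only at this
    omega

end Trees

/-! ### The path graph -/

theorem pathGraph_acyclic (n : ℕ) : (SimpleGraph.pathGraph n).IsAcyclic := by
  have key : ∀ i j : Fin n, i.val + 1 = j.val →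
      ¬ ((SimpleGraph.pathGraph n).deleteEdges {s(i, j)}).Reachable i j := by
    intro i j hij h
    have hall : ∀ x, ((SimpleGraph.pathGraph n).deleteEdges {s(i, j)}).Reachable i x →
        x.val ≤ i.val := by
      intro x hx
      rw [SimpleGraph.reachable_iff_reflTransGen] at hx
      induction hx with
      | refl => exact le_rfl
      | tail h1 h2 ih =>
        rename_i y z
        rw [SimpleGraph.deleteEdges_adj, SimpleGraph.pathGraph_adj] at h2
        obtain ⟨ha, hb⟩ := h2
        by_contra hcon
        apply hb
        have e1 : y = i := Fin.ext (by omega)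
        have e2 : z = j := Fin.ext (by omega)
        rw [e1, e2]
        rfl
    have := hall j h
    omega
  rw [SimpleGraph.isAcyclic_iff_forall_adj_isBridge]
  intro u v huv
  have huv' := huv
  rw [SimpleGraph.pathGraph_adj] at huv'
  rw [SimpleGraph.isBridge_iff]
  rcases huv' with h | h
  · simpa using key u v h
  · intro hr
    refine key v u h ?_
    rw [Sym2.eq_swap]
    simpa using hr.symm

theorem pathGraph_tree (n : ℕ) (hn : 0 < n) : (SimpleGraph.pathGraph n).IsTree := by
  obtain ⟨k, rfl⟩ : ∃ k, n = k + 1 := ⟨n - 1, by omega⟩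
  exact ⟨SimpleGraph.pathGraph_connected k, pathGraph_acyclic _⟩

theorem path_right {n : ℕ} (i j : Fin n) (hij : i.val + 1 = j.val) (x : Fin n) (hx : i < x) :
    x ∈ compAway (SimpleGraph.pathGraph n) i j := by
  have : ∀ k : ℕ, ∀ x : Fin n, x.val = j.val + k →
      x ∈ compAway (SimpleGraph.pathGraph n) i j := by
    intro k
    induction k with
    | zero =>
      intro x hx
      have : x = j := Fin.ext (by omega)
      rw [this]
      exact SimpleGraph.Reachable.refl _
    | succ k ih =>
      intro x hx
      have hlt : j.val + k < n := by have := x.isLt; omega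
      refine SimpleGraph.Reachable.trans (ih ⟨j.val + k, hlt⟩ rfl) (SimpleGraph.Adj.reachable ?_)
      rw [SimpleGraph.deleteEdges_adj, SimpleGraph.pathGraph_adj]
      refine ⟨Or.inl (by simp only; omega), ?_⟩
      simp only [Set.mem_singleton_iff, Sym2.eq_iff, Fin.ext_iff]
      omega
  have hx' : i.val < x.val := hx
  exact this (x.val - j.val) x (by omega)

theorem path_left {n : ℕ} (i j : Fin n) (hij : j.val + 1 = i.val) (x : Fin n) (hx : x < i) :
    x ∈ compAway (SimpleGraph.pathGraph n) i j := by
  have : ∀ k : ℕ, ∀ x : Fin n, x.val + k = j.val →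
      x ∈ compAway (SimpleGraph.pathGraph n) i j := by
    intro k
    induction k with
    | zero =>
      intro x hx
      have : x = j := Fin.ext (by omega)
      rw [this]
      exact SimpleGraph.Reachable.refl _
    | succ k ih =>
      intro x hx
      have hlt : x.val + 1 < n := by have := j.isLt; omega
      refine SimpleGraph.Reachable.trans (ih ⟨x.val + 1, hlt⟩ (by simp only; omega))
        (SimpleGraph.Adj.reachable ?_)
      rw [SimpleGraph.deleteEdges_adj, SimpleGraph.pathGraph_adj]
      refine ⟨Or.inr (by simp only), ?_⟩
      simp only [Set.mem_singleton_iff, Sym2.eq_iff, Fin.ext_iff]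
      omega
  have hx' : x.val < i.val := hx
  exact this (j.val - x.val) x (by omega)

theorem shortDim_mono {F : Type} [Field F] {n : ℕ} (C : Submodule F (Fin n → F))
    {J K : Set (Fin n)} (h : J ⊆ K) : shortDim C J ≤ shortDim C K := by
  refine Submodule.finrank_mono (inf_le_inf le_rfl ?_)
  intro f hf
  simp only [supportedOn, Submodule.mem_pi] at hf ⊢
  exact fun i hi => hf i fun hj => hi (h hj)

theorem shortDim_empty {F : Type} [Field F] {n : ℕ} (C : Submodule F (Fin n → F)) :
    shortDim C ∅ = 0 := by
  have : supportedOn F (∅ : Set (Fin n)) = ⊥ := by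
    rw [eq_bot_iff]
    intro f hf
    simp only [supportedOn, Submodule.mem_pi] at hf
    rw [Submodule.mem_bot]
    funext i
    simpa using hf i (by simp)
  unfold shortDim
  rw [this, inf_bot_eq, finrank_bot]

theorem treeWidth_le_trellisWidth {F : Type} [Field F] {n : ℕ} (hn : 0 < n)
    (C : Submodule F (Fin n → F)) : treeWidth C ≤ trellisWidth C := by
  classical
  have hne : {t : ℕ | ∃ π : Equiv.Perm (Fin n),
    t = Finset.univ.sup fun i : Fin n =>
      finrank F ↥C - shortDim C (⇑π '' {j | j < i}) - shortDim C (⇑π '' {j | i < j})}.Nonempty :=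
    ⟨_, Equiv.refl _, rfl⟩
  obtain ⟨π, hπ⟩ := Nat.sInf_mem hne
  have hπ' : trellisWidth C = _ := hπ
  rw [hπ']
  refine le_trans (Nat.sInf_le ⟨n, SimpleGraph.pathGraph n, π.symm, pathGraph_tree n hn, rfl⟩) ?_
  unfold constraintComplexity
  refine Finset.sup_mono_fun fun i _ => ?_
  unfold kappaNode
  rw [Nat.sub_sub]
  refine Nat.sub_le_sub_left ?_ _
  set g : Fin n → ℕ := fun u => shortDim C (⇑π.symm ⁻¹' compAway (SimpleGraph.pathGraph n) i u)
  have hL : ∀ j : Fin n, j.val + 1 = i.val → shortDim C (⇑π '' {j | j < i}) ≤ g j := by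
    intro j hj
    refine shortDim_mono C ?_
    rintro _ ⟨x, hx, rfl⟩
    simpa using path_left i j hj x hx
  have hR : ∀ j : Fin n, i.val + 1 = j.val → shortDim C (⇑π '' {j | i < j}) ≤ g j := by
    intro j hj
    refine shortDim_mono C ?_
    rintro _ ⟨x, hx, rfl⟩
    simpa using path_right i j hj x hx
  have hL0 : i.val = 0 → shortDim C (⇑π '' {j | j < i}) = 0 := by
    intro h
    have : {j : Fin n | j < i} = ∅ := by
      ext x; simp only [Set.mem_ofPred_eq, Set.mem_empty_iff_false, iff_false, Fin.lt_def]; omega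
    rw [this, Set.image_empty, shortDim_empty]
  have hR0 : n ≤ i.val + 1 → shortDim C (⇑π '' {j | i < j}) = 0 := by
    intro h
    have : {j : Fin n | i < j} = ∅ := by
      ext x
      have := x.isLt
      simp only [Set.mem_ofPred_eq, Set.mem_empty_iff_false, iff_false, Fin.lt_def]; omega
    rw [this, Set.image_empty, shortDim_empty]
  by_cases h1 : i.val = 0
  · rw [hL0 h1, zero_add]
    by_cases h2 : n ≤ i.val + 1
    · rw [hR0 h2]; exact Nat.zero_le _
    · let j : Fin n := ⟨i.val + 1, by omega⟩
      refine (hR j rfl).trans (Finset.single_le_sum (f := g) (fun _ _ => Nat.zero_le _) ?_)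
      rw [mem_nbrFinset, SimpleGraph.pathGraph_adj]
      exact Or.inl rfl
  · let j' : Fin n := ⟨i.val - 1, by have := i.isLt; omega⟩
    have hj' : j'.val + 1 = i.val := by simp only [j']; omega
    have hm' : j' ∈ nbrFinset (SimpleGraph.pathGraph n) i := by
      rw [mem_nbrFinset, SimpleGraph.pathGraph_adj]
      exact Or.inr hj'
    by_cases h2 : n ≤ i.val + 1
    · rw [hR0 h2, add_zero]
      exact (hL j' hj').trans (Finset.single_le_sum (f := g) (fun _ _ => Nat.zero_le _) hm')
    · let j : Fin n := ⟨i.val + 1, by omega⟩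
      have hm : j ∈ nbrFinset (SimpleGraph.pathGraph n) i := by
        rw [mem_nbrFinset, SimpleGraph.pathGraph_adj]
        exact Or.inl rfl
      have hne : j' ≠ j := by
        intro e
        have := congrArg Fin.val e
        simp only [j', j] at this
        omega
      calc _ ≤ g j' + g j := add_le_add (hL j' hj') (hR j rfl)
        _ = ∑ u ∈ {j', j}, g u := (Finset.sum_pair hne).symm
        _ ≤ _ := Finset.sum_le_sum_of_subset (by
          intro x hx
          simp only [Finset.mem_insert, Finset.mem_singleton] at hx
          rcases hx with rfl | rfl <;> assumption)

/-! ### A recursive description of Reed–Muller codes -/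

/-- Even positions. -/
def ie0 (m : ℕ) (j : Fin (2 ^ m)) : Fin (2 ^ (m + 1)) :=
  ⟨2 * j.val, by have := j.isLt; rw [pow_succ]; omega⟩

/-- Odd positions. -/
def ie1 (m : ℕ) (j : Fin (2 ^ m)) : Fin (2 ^ (m + 1)) :=
  ⟨2 * j.val + 1, by have := j.isLt; rw [pow_succ]; omega⟩

/-- Restriction to even positions. -/
def ev0 (m : ℕ) : (Fin (2 ^ (m + 1)) → ZMod 2) →ₗ[ZMod 2] (Fin (2 ^ m) → ZMod 2) :=
  LinearMap.funLeft (ZMod 2) (ZMod 2) (ie0 m)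

/-- Restriction to odd positions. -/
def ev1 (m : ℕ) : (Fin (2 ^ (m + 1)) → ZMod 2) →ₗ[ZMod 2] (Fin (2 ^ m) → ZMod 2) :=
  LinearMap.funLeft (ZMod 2) (ZMod 2) (ie1 m)

theorem ev0_apply (m : ℕ) (f : Fin (2 ^ (m + 1)) → ZMod 2) (j) : ev0 m f j = f (ie0 m j) := rfl

theorem ev1_apply (m : ℕ) (f : Fin (2 ^ (m + 1)) → ZMod 2) (j) : ev1 m f j = f (ie1 m j) := rfl

theorem ie_cases (m : ℕ) (i : Fin (2 ^ (m + 1))) : (∃ j, i = ie0 m j) ∨ (∃ j, i = ie1 m j) := by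
  have hi := i.isLt
  have h2 : i.val / 2 < 2 ^ m := by
    have hp : 2 ^ (m + 1) = 2 * 2 ^ m := by rw [pow_succ, mul_comm]
    omega
  rcases Nat.mod_two_eq_zero_or_one i.val with h | h
  · exact Or.inl ⟨⟨i.val / 2, h2⟩, Fin.ext (by simp only [ie0]; omega)⟩
  · exact Or.inr ⟨⟨i.val / 2, h2⟩, Fin.ext (by simp only [ie1]; omega)⟩

theorem ev_ext (m : ℕ) (f g : Fin (2 ^ (m + 1)) → ZMod 2) (h0 : ev0 m f = ev0 m g)
    (h1 : ev1 m f = ev1 m g) : f = g := by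
  funext i
  rcases ie_cases m i with ⟨j, rfl⟩ | ⟨j, rfl⟩
  · exact congrFun h0 j
  · exact congrFun h1 j

theorem half_lt (m : ℕ) (i : Fin (2 ^ (m + 1))) : i.val / 2 < 2 ^ m := by
  have hi := i.isLt
  have hp : 2 ^ (m + 1) = 2 * 2 ^ m := by rw [pow_succ, mul_comm]
  omega

/-- Interleaving. -/
def mix (m : ℕ) (u w : Fin (2 ^ m) → ZMod 2) : Fin (2 ^ (m + 1)) → ZMod 2 := fun i =>
  if i.val % 2 = 0 then u ⟨i.val / 2, half_lt m i⟩
  else w ⟨i.val / 2, half_lt m i⟩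

theorem ev0_mix (m : ℕ) (u w : Fin (2 ^ m) → ZMod 2) : ev0 m (mix m u w) = u := by
  funext j
  rw [ev0_apply]
  simp [mix, ie0]

theorem ev1_mix (m : ℕ) (u w : Fin (2 ^ m) → ZMod 2) : ev1 m (mix m u w) = w := by
  funext j
  rw [ev1_apply]
  have h1 : (2 * j.val + 1) % 2 = 1 := by omega
  have h2 : (2 * j.val + 1) / 2 = j.val := by omega
  simp [mix, ie1, h1, h2]

/-- Recursive Reed–Muller code: degree less than `k`. -/
def KK : (m k : ℕ) → Submodule (ZMod 2) (Fin (2 ^ m) → ZMod 2)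
  | 0, k => if k = 0 then ⊥ else ⊤
  | m + 1, k => (KK m k).comap (ev0 m) ⊓ (KK m (k - 1)).comap (ev1 m - ev0 m)

theorem KK_zero (k : ℕ) : KK 0 k = if k = 0 then ⊥ else ⊤ := rfl

theorem mem_KK_succ (m k : ℕ) (f) : f ∈ KK (m + 1) k ↔
    ev0 m f ∈ KK m k ∧ ev1 m f - ev0 m f ∈ KK m (k - 1) := Iff.rfl

theorem KK_bot (m : ℕ) : KK m 0 = ⊥ := by
  induction m with
  | zero => rfl
  | succ m ih =>
    rw [eq_bot_iff]
    intro f hf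
    rw [mem_KK_succ, Nat.zero_sub, ih, Submodule.mem_bot, Submodule.mem_bot] at hf
    obtain ⟨h0, h1⟩ := hf
    rw [h0, sub_zero] at h1
    rw [Submodule.mem_bot]
    exact ev_ext m f 0 (by rw [h0, map_zero]) (by rw [h1, map_zero])

theorem KK_mono (m : ℕ) : ∀ k, KK m (k - 1) ≤ KK m k := by
  induction m with
  | zero =>
    intro k
    rw [KK_zero, KK_zero]
    split_ifs
    · exact le_rfl
    · exact bot_le
    · omega
    · exact le_rfl
  | succ m ih =>
    intro k f hf
    rw [mem_KK_succ] at hf ⊢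
    exact ⟨ih k hf.1, ih (k - 1) hf.2⟩

theorem ev1_mem (m k : ℕ) (f) (h : f ∈ KK (m + 1) k) : ev1 m f ∈ KK m k := by
  rw [mem_KK_succ] at h
  have := (KK m k).add_mem h.1 (KK_mono m k h.2)
  simpa using this

/-- The evaluation point attached to an index. -/
def bpt (m : ℕ) (i : Fin (2 ^ m)) : Fin m → ZMod 2 :=
  fun j => if Nat.testBit i.val j.val then 1 else 0

theorem bpt_ie0 (m : ℕ) (i : Fin (2 ^ m)) : bpt (m + 1) (ie0 m i) = Fin.cons 0 (bpt m i) := by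
  funext j
  refine Fin.cases ?_ (fun j => ?_) j
  · simp [bpt, ie0]
  · have h : Nat.testBit (ie0 m i).val j.succ.val = Nat.testBit i.val j.val := by
      change Nat.testBit (2 * i.val) (j.val + 1) = _
      rw [Nat.testBit_succ, show (2 * i.val) / 2 = i.val by omega]
    simp only [bpt, Fin.cons_succ, h]

theorem bpt_ie1 (m : ℕ) (i : Fin (2 ^ m)) : bpt (m + 1) (ie1 m i) = Fin.cons 1 (bpt m i) := by
  funext j
  refine Fin.cases ?_ (fun j => ?_) j
  · simp [bpt, ie1]
  · have h : Nat.testBit (ie1 m i).val j.succ.val = Nat.testBit i.val j.val := by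
      change Nat.testBit (2 * i.val + 1) (j.val + 1) = _
      rw [Nat.testBit_succ, show (2 * i.val + 1) / 2 = i.val by omega]
    simp only [bpt, Fin.cons_succ, h]

theorem monomial_mem (m : ℕ) : ∀ (k : ℕ) (s : Fin m → ℕ), ∑ j, s j < k →
    (fun i => ∏ j, bpt m i j ^ s j) ∈ KK m k := by
  induction m with
  | zero =>
    intro k s h
    rw [KK_zero, if_neg (by omega)]
    exact Submodule.mem_top
  | succ m ih =>
    intro k s h
    rw [Fin.sum_univ_succ] at h
    rw [mem_KK_succ]
    have e0 : ev0 m (fun i => ∏ j, bpt (m + 1) i j ^ s j) =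
        fun i => 0 ^ s 0 * ∏ j, bpt m i j ^ s j.succ := by
      funext i
      rw [ev0_apply]
      simp only [bpt_ie0, Fin.prod_univ_succ, Fin.cons_zero, Fin.cons_succ]
    have e1 : ev1 m (fun i => ∏ j, bpt (m + 1) i j ^ s j) =
        fun i => ∏ j, bpt m i j ^ s j.succ := by
      funext i
      rw [ev1_apply]
      simp only [bpt_ie1, Fin.prod_univ_succ, Fin.cons_zero, Fin.cons_succ, one_pow, one_mul]
    rw [e0, e1]
    by_cases h0 : s 0 = 0
    · simp only [h0, pow_zero, one_mul]
      refine ⟨ih k _ (by omega), ?_⟩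
      rw [sub_self]
      exact Submodule.zero_mem _
    · simp only [ne_eq, h0, not_false_eq_true, zero_pow, zero_mul]
      refine ⟨Submodule.zero_mem _, ?_⟩
      have : (fun i => ∏ j, bpt m i j ^ s j.succ) - (fun _ => (0 : ZMod 2)) =
          fun i => ∏ j, bpt m i j ^ s j.succ := by
        funext i; simp
      rw [this]
      exact ih (k - 1) _ (by omega)

theorem poly_mem (m r : ℕ) (f : MvPolynomial (Fin m) (ZMod 2)) (hf : f.totalDegree ≤ r) :
    (fun i => MvPolynomial.eval (bpt m i) f) ∈ KK m (r + 1) := by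
  have e : (fun i => MvPolynomial.eval (bpt m i) f) =
      ∑ s ∈ f.support, f.coeff s • fun i => ∏ j, bpt m i j ^ s j := by
    funext i
    rw [MvPolynomial.eval_eq', Finset.sum_apply]
    rfl
  rw [e]
  refine Submodule.sum_mem _ fun s hs => Submodule.smul_mem _ _ (monomial_mem m _ _ ?_)
  have h1 := MvPolynomial.le_totalDegree hs
  rw [Finsupp.sum_fintype _ _ (fun _ => rfl)] at h1
  omega

theorem exists_poly (m : ℕ) : ∀ (k : ℕ) (f : Fin (2 ^ m) → ZMod 2), f ∈ KK m k →
    ∃ p : MvPolynomial (Fin m) (ZMod 2), (p = 0 ∨ p.totalDegree < k) ∧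
      f = fun i => MvPolynomial.eval (bpt m i) p := by
  induction m with
  | zero =>
    intro k f hf
    rw [KK_zero] at hf
    split_ifs at hf with h
    · rw [Submodule.mem_bot] at hf
      exact ⟨0, Or.inl rfl, by rw [hf]; funext i; simp⟩
    · refine ⟨MvPolynomial.C (f 0), Or.inr (by rw [MvPolynomial.totalDegree_C]; omega), ?_⟩
      funext i
      have : i = 0 := Subsingleton.elim (α := Fin 1) i 0
      rw [this, MvPolynomial.eval_C]
  | succ m ih =>
    intro k f hf
    rw [mem_KK_succ] at hf
    obtain ⟨p, hp, hpe⟩ := ih k _ hf.1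
    obtain ⟨q, hq, hqe⟩ := ih (k - 1) _ hf.2
    have ev : ∀ (c : ZMod 2) (x : Fin m → ZMod 2),
        MvPolynomial.eval (Fin.cons c x : Fin (m + 1) → ZMod 2)
          (MvPolynomial.rename Fin.succ p + MvPolynomial.X 0 * MvPolynomial.rename Fin.succ q) =
        MvPolynomial.eval x p + c * MvPolynomial.eval x q := by
      intro c x
      have hc : (Fin.cons c x : Fin (m + 1) → ZMod 2) ∘ Fin.succ = x := by
        funext j; simp
      simp [MvPolynomial.eval_rename, hc]
    refine ⟨MvPolynomial.rename Fin.succ p + MvPolynomial.X 0 * MvPolynomial.rename Fin.succ q,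
      ?_, ?_⟩
    · have hq' : q = 0 ∨
          (MvPolynomial.X (0 : Fin (m + 1)) * MvPolynomial.rename Fin.succ q).totalDegree < k := by
        rcases hq with h | h
        · exact Or.inl h
        · right
          refine lt_of_le_of_lt (MvPolynomial.totalDegree_mul _ _) ?_
          rw [MvPolynomial.totalDegree_X]
          have := MvPolynomial.totalDegree_rename_le (Fin.succ : Fin m → Fin (m + 1)) q
          omega
      have hp' : p = 0 ∨ (MvPolynomial.rename (Fin.succ : Fin m → Fin (m + 1)) p).totalDegree < k :=
        hp.imp id fun h => lt_of_le_of_lt (MvPolynomial.totalDegree_rename_le _ p) h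
      rcases hp' with rfl | hp'
      · rcases hq' with rfl | hq'
        · left; simp
        · right; simpa using hq'
      · right
        rcases hq' with rfl | hq'
        · simpa using hp'
        · exact lt_of_le_of_lt (MvPolynomial.totalDegree_add _ _) (max_lt hp' hq')
    · refine ev_ext m _ _ ?_ ?_
      · rw [hpe]
        funext i
        rw [ev0_apply]
        simp only [bpt_ie0, ev, zero_mul, add_zero]
      · have h1 : ev1 m f = ev0 m f + (ev1 m f - ev0 m f) := by abel
        rw [h1, hqe, hpe]
        funext i
        rw [ev1_apply]
        simp only [bpt_ie1, ev, one_mul, Pi.add_apply]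

theorem RM_eq_KK (r m : ℕ) : RMcode r m = KK m (r + 1) := by
  apply le_antisymm
  · refine Submodule.span_le.2 ?_
    rintro w ⟨f, hf, rfl⟩
    exact poly_mem m r f hf
  · intro f hf
    obtain ⟨p, hp, hpe⟩ := exists_poly m _ f hf
    refine Submodule.subset_span ⟨p, ?_, hpe⟩
    rcases hp with rfl | h
    · simp
    · omega

/-! ### Dimensions of shortenings -/

theorem mem_supp {n : ℕ} (J : Set (Fin n)) (f : Fin n → ZMod 2) :
    f ∈ supportedOn (ZMod 2) J ↔ ∀ i, i ∉ J → f i = 0 := by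
  simp [supportedOn, Submodule.mem_pi]

theorem finrank_le_add {n n' : ℕ} (P : Submodule (ZMod 2) (Fin n → ZMod 2))
    (A B : Submodule (ZMod 2) (Fin n' → ZMod 2))
    (φ ψ : (Fin n → ZMod 2) →ₗ[ZMod 2] (Fin n' → ZMod 2))
    (hφ : ∀ f ∈ P, φ f ∈ A) (hψ : ∀ f ∈ P, φ f = 0 → ψ f ∈ B)
    (hinj : ∀ f ∈ P, φ f = 0 → ψ f = 0 → f = 0) :
    finrank (ZMod 2) P ≤ finrank (ZMod 2) A + finrank (ZMod 2) B := by
  have h := LinearMap.finrank_range_add_finrank_ker (φ.domRestrict P)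
  have h1 : finrank (ZMod 2) (LinearMap.range (φ.domRestrict P)) ≤ finrank (ZMod 2) A := by
    refine Submodule.finrank_mono ?_
    rintro _ ⟨x, rfl⟩
    exact hφ _ x.2
  have h2 : finrank (ZMod 2) (LinearMap.ker (φ.domRestrict P)) ≤ finrank (ZMod 2) B := by
    let θ : LinearMap.ker (φ.domRestrict P) →ₗ[ZMod 2] B :=
      LinearMap.codRestrict B (ψ ∘ₗ P.subtype ∘ₗ (LinearMap.ker (φ.domRestrict P)).subtype)
        (fun x => hψ _ x.1.2 x.2)
    refine LinearMap.finrank_le_finrank_of_injective (f := θ) ?_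
    rw [injective_iff_map_eq_zero]
    intro x hx
    have hx' : ψ x.1.1 = 0 := congrArg Subtype.val hx
    exact Subtype.ext (Subtype.ext (hinj _ x.1.2 x.2 hx'))
  omega

theorem ncard_split (m : ℕ) (J : Set (Fin (2 ^ (m + 1)))) :
    J.ncard = (ie0 m ⁻¹' J).ncard + (ie1 m ⁻¹' J).ncard := by
  have i0 : Function.Injective (ie0 m) := fun a b h => by
    have := congrArg Fin.val h
    simp only [ie0] at this
    exact Fin.ext (by omega)
  have i1 : Function.Injective (ie1 m) := fun a b h => by
    have := congrArg Fin.val h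
    simp only [ie1] at this
    exact Fin.ext (by omega)
  rw [← Set.ncard_image_of_injective _ i0, ← Set.ncard_image_of_injective _ i1,
    ← Set.ncard_union_eq]
  · congr 1
    ext x
    constructor
    · intro hx
      rcases ie_cases m x with ⟨j, rfl⟩ | ⟨j, rfl⟩
      · exact Or.inl ⟨j, hx, rfl⟩
      · exact Or.inr ⟨j, hx, rfl⟩
    · rintro (⟨j, hj, rfl⟩ | ⟨j, hj, rfl⟩) <;> exact hj
  · rw [Set.disjoint_left]
    rintro _ ⟨j, _, rfl⟩ ⟨l, _, h⟩
    have := congrArg Fin.val h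
    simp only [ie0, ie1] at this
    omega

theorem short_le (m : ℕ) : ∀ (k : ℕ) (J : Set (Fin (2 ^ m))),
    shortDim (KK m k) J ≤ UU (m + 1 - k) J.ncard := by
  induction m with
  | zero =>
    intro k J
    by_cases hk : k = 0
    · subst hk
      unfold shortDim
      rw [KK_bot, bot_inf_eq, finrank_bot]
      exact Nat.zero_le _
    · rw [show 0 + 1 - k = 0 by omega, UU_d_zero]
      rcases Set.eq_empty_or_nonempty J with rfl | hJ
      · rw [shortDim_empty]; exact Nat.zero_le _
      · have h1 : 1 ≤ J.ncard := by
          rw [Nat.one_le_iff_ne_zero, ← Nat.pos_iff_ne_zero, Set.ncard_pos]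
          exact hJ
        refine le_trans ?_ h1
        unfold shortDim
        refine (Submodule.finrank_le _).trans ?_
        simp
  | succ m ih =>
    intro k J
    by_cases hk : k = 0
    · subst hk
      unfold shortDim
      rw [KK_bot, bot_inf_eq, finrank_bot]
      exact Nat.zero_le _
    obtain ⟨l, rfl⟩ : ∃ l, k = l + 1 := ⟨k - 1, by omega⟩
    rw [ncard_split]
    set a := (ie0 m ⁻¹' J)
    set b := (ie1 m ⁻¹' J)
    have a1 := ih (l + 1) a
    have a2 := ih l a
    have b1 := ih (l + 1) b
    have b2 := ih l b
    have s0 : ∀ f ∈ supportedOn (ZMod 2) J, ev0 m f ∈ supportedOn (ZMod 2) a := by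
      intro f hf
      rw [mem_supp] at hf ⊢
      exact fun i hi => hf _ hi
    have s1 : ∀ f ∈ supportedOn (ZMod 2) J, ev1 m f ∈ supportedOn (ZMod 2) b := by
      intro f hf
      rw [mem_supp] at hf ⊢
      exact fun i hi => hf _ hi
    have ed : m + 1 - (l + 1) = m + 1 + 1 - (l + 1) - 1 := by omega
    have ed2 : m + 1 - l = m + 1 + 1 - (l + 1) := by omega
    rw [ed] at a1 b1
    rw [ed2] at a2 b2
    rcases le_total b.ncard a.ncard with hab | hab
    · -- image under `ev1`
      have h := finrank_le_add (KK (m + 1) (l + 1) ⊓ supportedOn (ZMod 2) J)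
        (KK m (l + 1) ⊓ supportedOn (ZMod 2) b) (KK m l ⊓ supportedOn (ZMod 2) a)
        (ev1 m) (ev0 m) (fun f hf => ⟨ev1_mem _ _ _ hf.1, s1 f hf.2⟩)
        (fun f hf h0 => by
          have := ((mem_KK_succ _ _ _).1 hf.1).2
          rw [h0, zero_sub, Submodule.neg_mem_iff] at this
          exact ⟨this, s0 f hf.2⟩)
        (fun f _ h1 h2 => ev_ext m f 0 (by rw [h2, map_zero]) (by rw [h1, map_zero]))
      have hs := UU_shift _ (m + 1 + 1 - (l + 1)) _ _ le_rfl hab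
      unfold shortDim at *
      omega
    · have h := finrank_le_add (KK (m + 1) (l + 1) ⊓ supportedOn (ZMod 2) J)
        (KK m (l + 1) ⊓ supportedOn (ZMod 2) a) (KK m l ⊓ supportedOn (ZMod 2) b)
        (ev0 m) (ev1 m) (fun f hf => ⟨((mem_KK_succ _ _ _).1 hf.1).1, s0 f hf.2⟩)
        (fun f hf h0 => by
          have := ((mem_KK_succ _ _ _).1 hf.1).2
          rw [h0, sub_zero] at this
          exact ⟨this, s1 f hf.2⟩)
        (fun f _ h1 h2 => ev_ext m f 0 (by rw [h1, map_zero]) (by rw [h2, map_zero]))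
      have hs := UU_shift _ (m + 1 + 1 - (l + 1)) _ _ le_rfl hab
      rw [add_comm b.ncard] at hs
      unfold shortDim at *
      omega

/-- Building codewords from the two halves. -/
theorem short_ge_step (m l : ℕ) (J : Set (Fin (2 ^ (m + 1))))
    (h : (ie0 m ⁻¹' J ⊆ ie1 m ⁻¹' J)) :
    shortDim (KK m (l + 1)) (ie0 m ⁻¹' J) + shortDim (KK m l) (ie1 m ⁻¹' J) ≤
      shortDim (KK (m + 1) (l + 1)) J := by
  unfold shortDim
  set A := KK m (l + 1) ⊓ supportedOn (ZMod 2) (ie0 m ⁻¹' J)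
  set B := KK m l ⊓ supportedOn (ZMod 2) (ie1 m ⁻¹' J)
  have key : ∀ (u z : Fin (2 ^ m) → ZMod 2), u ∈ A → z ∈ B →
      mix m u (u + z) ∈ KK (m + 1) (l + 1) ⊓ supportedOn (ZMod 2) J := by
    intro u z hu hz
    refine ⟨?_, ?_⟩
    · rw [SetLike.mem_coe, mem_KK_succ, ev0_mix, ev1_mix, add_sub_cancel_left]
      exact ⟨hu.1, hz.1⟩
    · have h1 := (mem_supp _ _).1 hu.2
      have h2 := (mem_supp _ _).1 hz.2
      rw [SetLike.mem_coe, mem_supp]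
      intro i hi
      rcases ie_cases m i with ⟨j, rfl⟩ | ⟨j, rfl⟩
      · rw [← ev0_apply m (mix m u (u + z)) j, ev0_mix]; exact h1 j hi
      · rw [← ev1_apply m (mix m u (u + z)) j, ev1_mix, Pi.add_apply, h1 j (fun hj => hi (h hj)), h2 j hi, add_zero]
  let θ : (A × B) →ₗ[ZMod 2] ↥(KK (m + 1) (l + 1) ⊓ supportedOn (ZMod 2) J) :=
    { toFun := fun p => ⟨mix m p.1.1 (p.1.1 + p.2.1), key _ _ p.1.2 p.2.2⟩
      map_add' := by
        intro p q
        apply Subtype.ext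
        refine ev_ext m _ _ ?_ ?_
        · simp [ev0_mix]
        · simp only [Submodule.coe_add, map_add, ev1_mix, Prod.fst_add, Prod.snd_add]
          abel
      map_smul' := by
        intro c p
        apply Subtype.ext
        refine ev_ext m _ _ ?_ ?_
        · simp [ev0_mix]
        · simp [ev1_mix, smul_add] }
  have hθ : Function.Injective θ := by
    rw [injective_iff_map_eq_zero]
    rintro ⟨u, z⟩ hx
    have hx' : mix m u.1 (u.1 + z.1) = 0 := congrArg Subtype.val hx
    have e0 : u.1 = 0 := by
      rw [← ev0_mix m u.1 (u.1 + z.1), hx', map_zero]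
    have e1 : u.1 + z.1 = 0 := by
      rw [← ev1_mix m u.1 (u.1 + z.1), hx', map_zero]
    rw [e0, zero_add] at e1
    exact Prod.ext (Subtype.ext e0) (Subtype.ext e1)
  have := LinearMap.finrank_le_finrank_of_injective hθ
  rwa [Module.finrank_prod] at this

theorem short_ge_step' (m l : ℕ) (J : Set (Fin (2 ^ (m + 1))))
    (h : (ie1 m ⁻¹' J ⊆ ie0 m ⁻¹' J)) :
    shortDim (KK m (l + 1)) (ie1 m ⁻¹' J) + shortDim (KK m l) (ie0 m ⁻¹' J) ≤
      shortDim (KK (m + 1) (l + 1)) J := by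
  unfold shortDim
  set A := KK m (l + 1) ⊓ supportedOn (ZMod 2) (ie1 m ⁻¹' J)
  set B := KK m l ⊓ supportedOn (ZMod 2) (ie0 m ⁻¹' J)
  have key : ∀ (u z : Fin (2 ^ m) → ZMod 2), u ∈ A → z ∈ B →
      mix m (u + z) u ∈ KK (m + 1) (l + 1) ⊓ supportedOn (ZMod 2) J := by
    intro u z hu hz
    refine ⟨?_, ?_⟩
    · rw [SetLike.mem_coe, mem_KK_succ, ev0_mix, ev1_mix, sub_add_cancel_left,
        Submodule.neg_mem_iff]
      exact ⟨Submodule.add_mem _ hu.1 (KK_mono m (l + 1) hz.1), hz.1⟩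
    · have h1 := (mem_supp _ _).1 hu.2
      have h2 := (mem_supp _ _).1 hz.2
      rw [SetLike.mem_coe, mem_supp]
      intro i hi
      rcases ie_cases m i with ⟨j, rfl⟩ | ⟨j, rfl⟩
      · rw [← ev0_apply m (mix m (u + z) u) j, ev0_mix, Pi.add_apply, h1 j (fun hj => hi (h hj)), h2 j hi, add_zero]
      · rw [← ev1_apply m (mix m (u + z) u) j, ev1_mix]; exact h1 j hi
  let θ : (A × B) →ₗ[ZMod 2] ↥(KK (m + 1) (l + 1) ⊓ supportedOn (ZMod 2) J) :=
    { toFun := fun p => ⟨mix m (p.1.1 + p.2.1) p.1.1, key _ _ p.1.2 p.2.2⟩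
      map_add' := by
        intro p q
        apply Subtype.ext
        refine ev_ext m _ _ ?_ ?_
        · simp only [Submodule.coe_add, map_add, ev0_mix, Prod.fst_add, Prod.snd_add]
          abel
        · simp [ev1_mix]
      map_smul' := by
        intro c p
        apply Subtype.ext
        refine ev_ext m _ _ ?_ ?_
        · simp [ev0_mix, smul_add]
        · simp [ev1_mix] }
  have hθ : Function.Injective θ := by
    rw [injective_iff_map_eq_zero]
    rintro ⟨u, z⟩ hx
    have hx' : mix m (u.1 + z.1) u.1 = 0 := congrArg Subtype.val hx
    have e0 : u.1 = 0 := by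
      rw [← ev1_mix m (u.1 + z.1) u.1, hx', map_zero]
    have e1 : u.1 + z.1 = 0 := by
      rw [← ev0_mix m (u.1 + z.1) u.1, hx', map_zero]
    rw [e0, zero_add] at e1
    exact Prod.ext (Subtype.ext e0) (Subtype.ext e1)
  have := LinearMap.finrank_le_finrank_of_injective hθ
  rwa [Module.finrank_prod] at this

theorem short_univ_zero (k : ℕ) (hk : k ≠ 0) (J : Set (Fin (2 ^ 0))) (hJ : J = Set.univ) :
    1 ≤ shortDim (KK 0 k) J := by
  unfold shortDim
  have : supportedOn (ZMod 2) J = ⊤ := by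
    rw [eq_top_iff]
    intro f _
    rw [mem_supp]
    intro i hi
    rw [hJ] at hi
    exact absurd (Set.mem_univ i) hi
  rw [this, KK_zero, if_neg hk, inf_top_eq, finrank_top]
  simp

theorem front_ge (m : ℕ) : ∀ (k s : ℕ), s ≤ 2 ^ m →
    UU (m + 1 - k) s ≤ shortDim (KK m k) {j | j.val < s} := by
  induction m with
  | zero =>
    intro k s hs
    rw [pow_zero] at hs
    rcases Nat.eq_zero_or_pos s with rfl | h
    · rw [UU_zero]; exact Nat.zero_le _
    · have : s = 1 := by omega
      subst this
      by_cases hk : k = 0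
      · subst hk
        rw [UU_one _ (by omega)]; exact Nat.zero_le _
      · rw [show 0 + 1 - k = 0 by omega, UU_d_zero]
        refine short_univ_zero k hk _ ?_
        ext x
        have := x.isLt
        simp
  | succ m ih =>
    intro k s hs
    rcases Nat.eq_zero_or_pos k with rfl | hk
    · have h1 := UU_mono (m + 1 + 1 - 0) hs
      have h2 := UU_big (m + 1)
      rw [Nat.sub_zero] at *
      omega
    obtain ⟨l, rfl⟩ : ∃ l, k = l + 1 := ⟨k - 1, by omega⟩
    rw [pow_succ] at hs
    have hst := short_ge_step' m l {j | j.val < s} (by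
      intro j hj
      have hj' : 2 * j.val + 1 < s := hj
      show 2 * j.val < s
      omega)
    refine le_trans ?_ hst
    have e1 : ie1 m ⁻¹' {j | j.val < s} = {j | j.val < s / 2} := by
      ext j
      change 2 * j.val + 1 < s ↔ j.val < s / 2
      omega
    have e0 : ie0 m ⁻¹' {j | j.val < s} = {j | j.val < (s + 1) / 2} := by
      ext j
      change 2 * j.val < s ↔ j.val < (s + 1) / 2
      omega
    rw [e1, e0]
    have i1 := ih (l + 1) (s / 2) (by omega)
    have i2 := ih l ((s + 1) / 2) (by omega)
    rw [show m + 1 - (l + 1) = m + 1 + 1 - (l + 1) - 1 by omega] at i1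
    rw [show m + 1 - l = m + 1 + 1 - (l + 1) by omega] at i2
    rcases Nat.even_or_odd' s with ⟨x, rfl | rfl⟩
    · rw [UU_even]
      rw [show 2 * x / 2 = x by omega] at *
      rw [show (2 * x + 1) / 2 = x by omega] at *
      omega
    · rw [UU_odd]
      rw [show (2 * x + 1) / 2 = x by omega] at *
      rw [show (2 * x + 1 + 1) / 2 = x + 1 by omega] at *
      omega

theorem back_ge (m : ℕ) : ∀ (k s : ℕ), s ≤ 2 ^ m →
    UU (m + 1 - k) s ≤ shortDim (KK m k) {j | 2 ^ m ≤ j.val + s} := by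
  induction m with
  | zero =>
    intro k s hs
    rw [pow_zero] at hs
    rcases Nat.eq_zero_or_pos s with rfl | h
    · rw [UU_zero]; exact Nat.zero_le _
    · have : s = 1 := by omega
      subst this
      by_cases hk : k = 0
      · subst hk
        rw [UU_one _ (by omega)]; exact Nat.zero_le _
      · rw [show 0 + 1 - k = 0 by omega, UU_d_zero]
        refine short_univ_zero k hk _ ?_
        ext x
        have := x.isLt
        simp
  | succ m ih =>
    intro k s hs
    rcases Nat.eq_zero_or_pos k with rfl | hk
    · have h1 := UU_mono (m + 1 + 1 - 0) hs
      have h2 := UU_big (m + 1)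
      rw [Nat.sub_zero] at *
      omega
    obtain ⟨l, rfl⟩ : ∃ l, k = l + 1 := ⟨k - 1, by omega⟩
    have hpow : 2 ^ (m + 1) = 2 * 2 ^ m := by rw [pow_succ, mul_comm]
    rw [hpow] at hs
    have hst := short_ge_step m l {j | 2 ^ (m + 1) ≤ j.val + s} (by
      intro j hj
      have hj' : 2 ^ (m + 1) ≤ 2 * j.val + s := hj
      show 2 ^ (m + 1) ≤ 2 * j.val + 1 + s
      omega)
    refine le_trans ?_ hst
    have e0 : ie0 m ⁻¹' {j | 2 ^ (m + 1) ≤ j.val + s} = {j | 2 ^ m ≤ j.val + s / 2} := by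
      ext j
      change 2 ^ (m + 1) ≤ 2 * j.val + s ↔ 2 ^ m ≤ j.val + s / 2
      omega
    have e1 : ie1 m ⁻¹' {j | 2 ^ (m + 1) ≤ j.val + s} = {j | 2 ^ m ≤ j.val + (s + 1) / 2} := by
      ext j
      change 2 ^ (m + 1) ≤ 2 * j.val + 1 + s ↔ 2 ^ m ≤ j.val + (s + 1) / 2
      omega
    rw [e1, e0]
    have i1 := ih (l + 1) (s / 2) (by omega)
    have i2 := ih l ((s + 1) / 2) (by omega)
    rw [show m + 1 - (l + 1) = m + 1 + 1 - (l + 1) - 1 by omega] at i1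
    rw [show m + 1 - l = m + 1 + 1 - (l + 1) by omega] at i2
    rcases Nat.even_or_odd' s with ⟨x, rfl | rfl⟩
    · rw [UU_even]
      rw [show 2 * x / 2 = x by omega] at *
      rw [show (2 * x + 1) / 2 = x by omega] at *
      omega
    · rw [UU_odd]
      rw [show (2 * x + 1) / 2 = x by omega] at *
      rw [show (2 * x + 1 + 1) / 2 = x + 1 by omega] at *
      omega

theorem RM_short_le (r d : ℕ) (J : Set (Fin (2 ^ (r + d)))) :
    shortDim (RMcode r (r + d)) J ≤ UU d J.ncard := by
  rw [RM_eq_KK]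
  have := short_le (r + d) (r + 1) J
  rwa [show r + d + 1 - (r + 1) = d by omega] at this

theorem shortDim_univ {n : ℕ} (C : Submodule (ZMod 2) (Fin n → ZMod 2)) :
    shortDim C Set.univ = finrank (ZMod 2) C := by
  have : supportedOn (ZMod 2) (Set.univ : Set (Fin n)) = ⊤ := by
    rw [eq_top_iff]
    intro f _
    rw [mem_supp]
    intro i hi
    exact absurd (Set.mem_univ i) hi
  unfold shortDim
  rw [this, inf_top_eq]

theorem RM_finrank (r d : ℕ) :
    finrank (ZMod 2) (RMcode r (r + d)) = UU d (2 ^ (r + d)) := by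
  apply le_antisymm
  · have := RM_short_le r d Set.univ
    rwa [shortDim_univ, Set.ncard_univ, Nat.card_fin] at this
  · rw [RM_eq_KK]
    have := front_ge (r + d) (r + 1) _ le_rfl
    rw [show r + d + 1 - (r + 1) = d by omega] at this
    refine this.trans ?_
    unfold shortDim
    exact Submodule.finrank_mono inf_le_left

theorem trellis_upper (r d : ℕ) : trellisWidth (RMcode r (r + d)) ≤ tauRM r (r + d) := by
  refine le_trans (Nat.sInf_le ⟨Equiv.refl _, rfl⟩) ?_
  refine Finset.sup_le fun i _ => ?_
  rw [RM_finrank]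
  have hi := i.isLt
  have e1 : ⇑(Equiv.refl (Fin (2 ^ (r + d)))) '' {j | j < i} = {j | j.val < i.val} := by
    ext x; simp
  have e2 : ⇑(Equiv.refl (Fin (2 ^ (r + d)))) '' {j | i < j} =
      {j | 2 ^ (r + d) ≤ j.val + (2 ^ (r + d) - 1 - i.val)} := by
    ext x
    simp only [Equiv.coe_refl, Set.image_id, Set.mem_ofPred_eq, Fin.lt_def]
    omega
  rw [e1, e2, RM_eq_KK]
  have h1 := front_ge (r + d) (r + 1) i.val hi.le
  have h2 := back_ge (r + d) (r + 1) (2 ^ (r + d) - 1 - i.val) (by omega)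
  rw [show r + d + 1 - (r + 1) = d by omega] at h1 h2
  have h3 := upper (r + d) r d i.val (2 ^ (r + d) - 1 - i.val) rfl (by omega)
  omega

theorem tree_lower (r d : ℕ) : tauRM r (r + d) ≤ treeWidth (RMcode r (r + d)) := by
  classical
  have hne : {t : ℕ | ∃ (N : ℕ) (T : SimpleGraph (Fin N)) (ω : Fin (2 ^ (r + d)) → Fin N),
      T.IsTree ∧ t = constraintComplexity (RMcode r (r + d)) T ω}.Nonempty :=
    ⟨_, 2 ^ (r + d), SimpleGraph.pathGraph _, id, pathGraph_tree _ (by positivity), rfl⟩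
  obtain ⟨N, T, ω, hT, ht⟩ := Nat.sInf_mem hne
  have ht' : treeWidth (RMcode r (r + d)) = _ := ht
  rw [ht']
  suffices h : ∃ u, tauRM r (r + d) ≤ kappaNode (RMcode r (r + d)) T ω u by
    obtain ⟨u, hu⟩ := h
    exact hu.trans (Finset.le_sup (f := kappaNode (RMcode r (r + d)) T ω) (Finset.mem_univ u))
  suffices h : ∃ u, tauRM r (r + d) + ∑ w ∈ nbrFinset T u, UU d (ω ⁻¹' compAway T u w).ncard ≤
      UU d (2 ^ (r + d)) by
    obtain ⟨u, hu⟩ := h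
    refine ⟨u, ?_⟩
    unfold kappaNode
    rw [RM_finrank]
    have : ∑ w ∈ nbrFinset T u, shortDim (RMcode r (r + d)) (ω ⁻¹' compAway T u w) ≤
        ∑ w ∈ nbrFinset T u, UU d (ω ⁻¹' compAway T u w).ncard :=
      Finset.sum_le_sum fun w _ => RM_short_le r d _
    omega
  rcases Nat.eq_zero_or_pos d with rfl | hd
  · let i0 : Fin (2 ^ (r + 0)) := ⟨0, by positivity⟩
    refine ⟨ω i0, ?_⟩
    have h1 := sum_parts_le hT.isAcyclic ω (ω i0)
    have h2 : 1 ≤ (ω ⁻¹' {ω i0}).ncard := by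
      rw [Nat.one_le_iff_ne_zero, ← Nat.pos_iff_ne_zero, Set.ncard_pos]
      exact ⟨i0, rfl⟩
    simp only [UU_d_zero]
    have ht : tauRM r (r + 0) = 1 := tau_diag r
    rw [ht]
    omega
  · have : Nonempty (Fin N) := hT.connected.nonempty
    obtain ⟨u, hu⟩ := exists_balanced hT.isAcyclic ω (2 ^ (r + d) / 3)
    have hsum := sum_parts_le hT.isAcyclic ω u
    refine ⟨u, ?_⟩
    rcases hu with hu | ⟨v, hv, hvI, hu⟩
    · have := lower_parts (nbrFinset T u) (fun w => (ω ⁻¹' compAway T u w).ncard) 0 r d (r + d) _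
        rfl hd rfl hu (Nat.zero_le _) (by omega)
      rwa [UU_zero, add_zero] at this
    · have e1 := Finset.sum_erase_add (nbrFinset T u)
        (fun w => (ω ⁻¹' compAway T u w).ncard) hv
      have e2 := Finset.sum_erase_add (nbrFinset T u)
        (fun w => UU d (ω ⁻¹' compAway T u w).ncard) hv
      have := lower_parts ((nbrFinset T u).erase v) (fun w => (ω ⁻¹' compAway T u w).ncard)
        (ω ⁻¹' compAway T u v).ncard r d (r + d) _ rfl hd rfl
        (fun w hw => hu w (Finset.mem_of_mem_erase hw) (Finset.ne_of_mem_erase hw)) hvI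
        (by omega)
      omega

/-- the treewidth of `RM(r,m)` equals its trelliswidth, and both equal
the stated binomial-sum expression. -/
theorem stmt8 (r m : ℕ) (hrm : r ≤ m) :
    treeWidth (RMcode r m) = trellisWidth (RMcode r m) ∧
    trellisWidth (RMcode r m) = tauRM r m := by
  obtain ⟨d, rfl⟩ : ∃ d, m = r + d := ⟨m - r, by omega⟩
  have h1 := treeWidth_le_trellisWidth (by positivity) (RMcode r (r + d))
  have h2 := trellis_upper r d
  have h3 := tree_lower r d
  omega
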